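/- Let ℓ be an odd prime and let G be a subgroup of GL₂(F_ℓ) such that every element of G lies in a conjugate of N_sp (the normalizer of the split Cartan), but some element of G is not diagonalizable over F_ℓ. Then one of the following holds: (0) G is contained in a conjugate of N_sp; (1) G is contained in a conjugate of N_ns and ℓ ≡ 3 (mod 4); (2) the image H of G in PGL₂(F_ℓ) is isomorphic to A₄ and ℓ ≡ 7 (mod 12); (3) H is isomorphic to S₄ and ℓ ≡ 13 (mod 24); (4) H is isomorphic to A₅ and ℓ ≡ 31 (mod 60). -/

import Mathlib

open Matrix

abbrev GL2 (ℓ : ℕ) : Type := GL (Fin 2) (ZMod ℓ)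

/-- The underlying matrix of an element of `GL₂(F_ℓ)`. -/
def mat {ℓ : ℕ} (g : GL2 ℓ) : Matrix (Fin 2) (Fin 2) (ZMod ℓ) := g

/-- `g` is a diagonal matrix. -/
def IsDiag {ℓ : ℕ} (g : GL2 ℓ) : Prop := mat g 0 1 = 0 ∧ mat g 1 0 = 0

/-- `g` is an antidiagonal matrix. -/
def IsAnti {ℓ : ℕ} (g : GL2 ℓ) : Prop := mat g 0 0 = 0 ∧ mat g 1 1 = 0

/-- `g` is a scalar matrix. -/
def IsScalar {ℓ : ℕ} (g : GL2 ℓ) : Prop :=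
  ∃ c : ZMod ℓ, mat g = c • (1 : Matrix (Fin 2) (Fin 2) (ZMod ℓ))

/-- Membership in the split Cartan subgroup `C_sp` (the diagonal matrices). -/
def InCsp {ℓ : ℕ} (g : GL2 ℓ) : Prop := IsDiag g

/-- Membership in the normalizer `N_sp` of the split Cartan (diagonal or antidiagonal). -/
def InNsp {ℓ : ℕ} (g : GL2 ℓ) : Prop := IsDiag g ∨ IsAnti g

/-- Membership in the nonsplit Cartan `C_ns` w.r.t. the nonresidue `δ`:
matrices of the form `[[a, δb], [b, a]]`. -/
def InCns {ℓ : ℕ} (δ : ZMod ℓ) (g : GL2 ℓ) : Prop :=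
  mat g 1 1 = mat g 0 0 ∧ mat g 0 1 = δ * mat g 1 0

/-- Membership in `N_ns \ C_ns` (as a matrix shape): `[[a, -δb], [b, -a]]`. -/
def InNnsAnti {ℓ : ℕ} (δ : ZMod ℓ) (g : GL2 ℓ) : Prop :=
  mat g 1 1 = - mat g 0 0 ∧ mat g 0 1 = - (δ * mat g 1 0)

/-- Membership in the normalizer `N_ns` of the nonsplit Cartan. -/
def InNns {ℓ : ℕ} (δ : ZMod ℓ) (g : GL2 ℓ) : Prop := InCns δ g ∨ InNnsAnti δ g

/-- `PGL₂(F_ℓ)`: the quotient of `GL₂(F_ℓ)` by its center (the scalar matrices). -/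
abbrev PGL2 (ℓ : ℕ) : Type := GL2 ℓ ⧸ Subgroup.center (GL2 ℓ)

/-- The natural projection `GL₂(F_ℓ) →* PGL₂(F_ℓ)`. -/
def toPGL (ℓ : ℕ) : GL2 ℓ →* PGL2 ℓ := QuotientGroup.mk' _

/-- The image of a subgroup of `GL₂(F_ℓ)` in `PGL₂(F_ℓ)`. -/
def projImage {ℓ : ℕ} (G : Subgroup (GL2 ℓ)) : Subgroup (PGL2 ℓ) := G.map (toPGL ℓ)

/-- `H` is isomorphic to the alternating group `A₄`. -/
def IsA4 {ℓ : ℕ} (H : Subgroup (PGL2 ℓ)) : Prop := Nonempty (H ≃* alternatingGroup (Fin 4))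

/-- `H` is isomorphic to the symmetric group `S₄`. -/
def IsS4 {ℓ : ℕ} (H : Subgroup (PGL2 ℓ)) : Prop := Nonempty (H ≃* Equiv.Perm (Fin 4))

/-- `H` is isomorphic to the alternating group `A₅`. -/
def IsA5 {ℓ : ℕ} (H : Subgroup (PGL2 ℓ)) : Prop := Nonempty (H ≃* alternatingGroup (Fin 5))

/-!
The image `H` of `G` in `PGL₂` acts on the projective line over an algebraic closure. Since `G` has
no parabolic elements, each nontrivial element of `H` fixes exactly two points. Klein's count of the
orbits of such points shows that `H` is `A₄`, `S₄` or `A₅`, unless some pair of fixed points is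
invariant, in which case `G` normalizes the Cartan subgroup attached to this pair. If that Cartan
subgroup is nonsplit, then the noncentral elements of `G` have trace zero, and `G` also normalizes
a split Cartan subgroup when `-1` is a square.

A nondiagonalizable `s ∈ G` has trace zero and `-det s` is not a square. In the exceptional cases,
an element of `H` of order `n > 2` comes from a diagonalizable matrix, so `n` divides `q - 1`, and
the quadratic character of the determinant is trivial on `A₄` and `A₅`, which decides `q` modulo 4.
On `S₄` it is the sign, so that the elements of order 4 have nonsquare determinant and 8 does not
divide `q - 1`.
-/

open MulAction
open scoped Pointwise MatrixGroups

section TwoFixedPoints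

/-- Every nontrivial element of `H` fixes exactly two points of `X`, as for a group of rotations
of the sphere. -/
def HasTwoFixedPoints (H X : Type*) [Group H] [MulAction H X] : Prop :=
  ∀ h : H, h ≠ 1 → (fixedBy X h).ncard = 2

/-- Some nontrivial element of `H` has an `H`-invariant set of fixed points, as for a group of
rotations preserving an axis. -/
def HasInvariantAxis (H X : Type*) [Group H] [MulAction H X] : Prop :=
  ∃ h : H, h ≠ 1 ∧ ∀ g : H, fixedBy X (g * h * g⁻¹) = fixedBy X h

variable {H X : Type*} [Group H] [MulAction H X]

namespace HasTwoFixedPoints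

lemma fixedBy_nonempty (h2 : HasTwoFixedPoints H X) {h : H} (h1 : h ≠ 1) :
    (fixedBy X h).Nonempty :=
  Set.nonempty_of_ncard_ne_zero (by rw [h2 h h1]; norm_num)

lemma finite_fixedBy (h2 : HasTwoFixedPoints H X) {h : H} (h1 : h ≠ 1) : (fixedBy X h).Finite :=
  Set.finite_of_ncard_ne_zero (by rw [h2 h h1]; norm_num)

lemma fixedBy_eq_of_subset (h2 : HasTwoFixedPoints H X) {h : H} (h1 : h ≠ 1) {s : Set X}
    (hs : s ⊆ fixedBy X h) (hc : s.ncard = 2) : fixedBy X h = s :=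
  (Set.eq_of_subset_of_ncard_le hs (by rw [h2 h h1, hc]) (h2.finite_fixedBy h1)).symm

lemma hasInvariantAxis_of_normal (h2 : HasTwoFixedPoints H X) (N : Subgroup H) [N.Normal]
    (hN : (Nat.card N).Prime) : HasInvariantAxis H X := by
  have := Fact.mk hN
  obtain ⟨h, hhN, h1⟩ := N.bot_or_exists_ne_one.resolve_left
    (by rintro rfl; exact Nat.not_prime_one (by simpa using hN))
  refine ⟨h, h1, fun g ↦ h2.fixedBy_eq_of_subset (by simpa using h1) ?_ (h2 h h1)⟩
  obtain ⟨k, hk⟩ := Subgroup.mem_zpowers_iff.1 <| mem_zpowers_of_prime_card (G := N) rfl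
    (g := ⟨h, hhN⟩) (g' := ⟨g * h * g⁻¹, Subgroup.Normal.conj_mem ‹_› h hhN g⟩)
    (by simpa [Subtype.ext_iff] using h1)
  have hpow : h ^ k = g * h * g⁻¹ := congrArg Subtype.val hk
  exact hpow ▸ fixedBy_subset_fixedBy_zpow X h k

lemma hasInvariantAxis_of_card_eq_two [Nontrivial H] (h2 : HasTwoFixedPoints H X)
    (hX : Nat.card X = 2) : HasInvariantAxis H X := by
  have huniv : ∀ h : H, h ≠ 1 → fixedBy X h = Set.univ := fun h h1 ↦ by
    have : Finite X := Nat.finite_of_card_ne_zero (by lia)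
    exact Set.eq_of_subset_of_ncard_le (Set.subset_univ _) (by rw [h2 h h1, Set.ncard_univ, hX])
  obtain ⟨h, h1⟩ := exists_ne (1 : H)
  exact ⟨h, h1, fun g ↦ by rw [huniv h h1, huniv _ (by simpa using h1)]⟩

lemma hasInvariantAxis_of_card_orbit_eq_two (h2 : HasTwoFixedPoints H X) {p : X}
    (hp : stabilizer H p ≠ ⊥) (hc : Nat.card (orbit H p) = 2) : HasInvariantAxis H X := by
  obtain ⟨h, hhp, h1⟩ := (stabilizer H p).bot_or_exists_ne_one.resolve_left hp
  obtain ⟨q, hqp, hq⟩ := (Nat.card_eq_two_iff' (⟨p, mem_orbit_self p⟩ : orbit H p)).1 hc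
  have hfix : ∀ x : orbit H p, h • x = x := by
    intro x
    have hhp' : h • (⟨p, mem_orbit_self p⟩ : orbit H p) = ⟨p, mem_orbit_self p⟩ := Subtype.ext hhp
    by_cases hx : x = ⟨p, mem_orbit_self p⟩
    · rw [hx, hhp']
    · rw [hq x hx]
      exact hq _ fun hhq ↦ hqp (smul_left_cancel h (hhq.trans hhp'.symm))
  have key : ∀ g : H, fixedBy X (g * h * g⁻¹) = orbit H p := fun g ↦ by
    refine h2.fixedBy_eq_of_subset (by simpa using h1) (fun x hx ↦ ?_) hc
    have hgx := congrArg Subtype.val (hfix (g⁻¹ • ⟨x, hx⟩))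
    simp only [orbit.coe_smul] at hgx
    rw [mem_fixedBy, mul_smul, mul_smul, hgx, smul_inv_smul]
  exact ⟨h, h1, fun g ↦ by rw [key g, ← key 1, one_mul, inv_one, mul_one]⟩

lemma toPermHom_orbit_injective (h2 : HasTwoFixedPoints H X) {p : X}
    (hp : 2 < Nat.card (orbit H p)) : Function.Injective (toPermHom H (orbit H p)) := by
  refine (injective_iff_map_eq_one _).2 fun h hh ↦ by_contra fun h1 ↦ ?_
  have hsub : orbit H p ⊆ fixedBy X h := fun x hx ↦
    congrArg Subtype.val (Equiv.congr_fun hh ⟨x, hx⟩)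
  have := Set.ncard_le_ncard hsub (h2.finite_fixedBy h1)
  rw [h2 h h1] at this
  exact absurd hp this.not_gt

lemma card_centralizer_le [Finite H] (h2 : HasTwoFixedPoints H X) {h : H} (h1 : h ≠ 1) {p : X}
    (hp : p ∈ fixedBy X h) :
    Nat.card (Subgroup.centralizer {h}) ≤ 2 * Nat.card (stabilizer H p) := by
  rw [← Nat.card_congr (orbitProdStabilizerEquivGroup (Subgroup.centralizer {h}) p), Nat.card_prod,
    ← h2 h h1]
  refine Nat.mul_le_mul (Set.ncard_le_ncard ?_ (h2.finite_fixedBy h1)) ?_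
  · rintro _ ⟨⟨c, hc⟩, rfl⟩
    have hcomm : c * h = h * c := Subgroup.mem_centralizer_singleton_iff.1 hc
    change h • c • p = c • p
    rw [smul_smul, ← hcomm, mul_smul, hp]
  · exact Nat.card_le_card_of_injective
      (fun c : stabilizer (Subgroup.centralizer {h}) p ↦ (⟨c.1.1, c.2⟩ : stabilizer H p))
      fun a b hab ↦ Subtype.ext (Subtype.ext (Subtype.mk.inj hab))

end HasTwoFixedPoints

end TwoFixedPoints

section Permutations

variable {H α : Type*} [Group H] [Finite α] {n : ℕ}

lemma nonempty_mulEquiv_perm (hα : Nat.card α = n) {f : H →* Equiv.Perm α}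
    (hf : Function.Injective f) (hc : Nat.card H = n.factorial) :
    Nonempty (H ≃* Equiv.Perm (Fin n)) := by
  have : Finite H := Finite.of_injective f hf
  have hb : Function.Bijective f :=
    (Nat.bijective_iff_injective_and_card f).2 ⟨hf, by rw [hc, Nat.card_perm, hα]⟩
  exact ⟨(MulEquiv.ofBijective f hb).trans (Finite.equivFinOfCardEq hα).permCongrHom⟩

lemma nonempty_mulEquiv_alternatingGroup (hα : Nat.card α = n) {f : H →* Equiv.Perm α}
    (hf : Function.Injective f) (hc : 2 * Nat.card H = n.factorial) :
    Nonempty (H ≃* alternatingGroup (Fin n)) := by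
  let e := (Finite.equivFinOfCardEq hα).permCongrHom
  let f' : H →* Equiv.Perm (Fin n) := e.toMonoidHom.comp f
  have hf' : Function.Injective f' := e.injective.comp hf
  have hcard : Nat.card f'.range = Nat.card H :=
    (Nat.card_congr (MonoidHom.ofInjective hf').toEquiv).symm
  have hindex : f'.range.index = 2 := by
    have hmul := f'.range.card_mul_index
    rw [Nat.card_perm, Nat.card_fin, ← hc, mul_comm 2, ← hcard] at hmul
    exact Nat.eq_of_mul_eq_mul_left Nat.card_pos hmul
  exact ⟨(MonoidHom.ofInjective hf').trans
    (MulEquiv.subgroupCongr (Equiv.Perm.eq_alternatingGroup_of_index_eq_two hindex))⟩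

lemma monoidHom_alternatingGroup_eq_one {α : Type*} [Fintype α] [DecidableEq α]
    (f : alternatingGroup α →* ℤˣ) : f = 1 := by
  refine MonoidHom.eq_of_eqOn_dense alternatingGroup.closure_isThreeCycles_eq_top fun σ hσ ↦ ?_
  have hpow : f σ ^ 3 = 1 := by
    rw [← map_pow, ← hσ.orderOf, Subgroup.orderOf_coe, pow_orderOf_eq_one, map_one]
  simpa [pow_succ] using hpow

lemma orderOf_finRotate (n : ℕ) : orderOf (finRotate (n + 2)) = n + 2 := by
  rw [isCycle_finRotate.orderOf, support_finRotate, Finset.card_univ, Fintype.card_fin]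

end Permutations

section Sylow

variable {H : Type*} [Group H] {p : ℕ}

lemma ker_toPermHom_sylow_le_normalizer (S : Sylow p H) :
    (toPermHom H (Sylow p H)).ker ≤ Subgroup.normalizer (S : Set H) := fun _ hg ↦
  Sylow.smul_eq_iff_mem_normalizer.1 (Equiv.congr_fun (MonoidHom.mem_ker.1 hg) S)

lemma mem_sylow_of_mem_normalizer {S T : Sylow p H} {x : H} (hx : x ∈ S)
    (hxT : x ∈ Subgroup.normalizer (T : Set H)) : x ∈ T := by
  have hinf := IsPGroup.inf_normalizer_sylow S.isPGroup' T
  exact (hinf.le ⟨hx, hxT⟩).2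

lemma exists_mem_sylow_of_orderOf_eq {x : H} (hx : orderOf x = p) :
    ∃ S : Sylow p H, x ∈ S := by
  have hz : IsPGroup p (Subgroup.zpowers x) := IsPGroup.of_card (n := 1) (by simp [hx])
  obtain ⟨S, hS⟩ := hz.exists_le_sylow
  exact ⟨S, hS (Subgroup.mem_zpowers x)⟩

lemma card_isConj_mul_card_centralizer (x : H) :
    Nat.card {y : H // IsConj x y} * Nat.card (Subgroup.centralizer {x}) = Nat.card H := by
  rw [Subgroup.nat_card_centralizer_nat_card_stabilizer, ← Nat.card_prod]
  refine Nat.card_congr ((Equiv.prodCongrLeft fun _ ↦ Equiv.subtypeEquivRight fun y ↦ ?_).trans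
    ((orbitProdStabilizerEquivGroup (ConjAct H) x).trans ConjAct.ofConjAct.toEquiv))
  rw [ConjAct.mem_orbit_conjAct, isConj_comm]

lemma sylow_eq_centralizer [Finite H] {S : Sylow p H} [IsMulCommutative S] {x : H} (hxS : x ∈ S)
    (hx : Nat.card (Subgroup.centralizer {x}) ≤ Nat.card S) :
    (S : Subgroup H) = Subgroup.centralizer {x} := by
  refine Subgroup.eq_of_le_of_card_ge (fun y hy ↦ ?_) hx
  rw [Subgroup.mem_centralizer_singleton_iff]
  exact congrArg Subtype.val (mul_comm' (⟨y, hy⟩ : S) ⟨x, hxS⟩)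

lemma pairwise_disjoint_sylow [Finite H] (hcomm : ∀ S : Sylow p H, IsMulCommutative S)
    (hcent : ∀ S : Sylow p H, ∀ x ∈ S, x ≠ 1 → Nat.card (Subgroup.centralizer {x}) ≤ Nat.card S) :
    Pairwise fun S T : Sylow p H ↦ Disjoint (S : Subgroup H) T := by
  refine fun S T hST ↦ Subgroup.disjoint_def.2 fun {x} hxS hxT ↦ by_contra fun hx1 ↦ hST ?_
  have := hcomm S
  have := hcomm T
  exact Sylow.ext ((sylow_eq_centralizer hxS (hcent S x hxS hx1)).trans
    (sylow_eq_centralizer hxT (hcent T x hxT hx1)).symm)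

lemma pairwise_disjoint_sylow_of_prime_card (hp : p.Prime)
    (hS : ∀ S : Sylow p H, Nat.card S = p) :
    Pairwise fun S T : Sylow p H ↦ Disjoint (S : Subgroup H) T := by
  intro S T hST
  have hcard : Nat.card ((S : Subgroup H) ⊓ T : Subgroup H) ∣ p :=
    (Subgroup.card_dvd_of_le inf_le_left).trans (hS S).dvd
  have : Finite S := Nat.finite_of_card_ne_zero ((hS S).trans_ne hp.ne_zero)
  rcases (Nat.dvd_prime hp).1 hcard with h | h
  · exact disjoint_iff.2 (Subgroup.card_eq_one.1 h)
  · have hinf : (S : Subgroup H) ⊓ T = S :=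
      Subgroup.eq_of_le_of_card_ge inf_le_left (by rw [h, hS S])
    exact absurd (Sylow.ext (S.is_maximal' T.isPGroup' (inf_eq_left.1 hinf))).symm hST

variable [Finite H] [Fact p.Prime]

lemma card_sylow_of_card_eq_pow_mul {k m : ℕ}
    (hH : Nat.card H = p ^ k * m) (hm : ¬ p ∣ m) (S : Sylow p H) : Nat.card S = p ^ k := by
  have hp : p.Prime := Fact.out
  have hcop : (p ^ k).Coprime m := (hp.coprime_iff_not_dvd.2 hm).pow_left k
  rw [S.card_eq_multiplicity, hH, Nat.factorization_mul_of_coprime hcop]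
  simp [hp.factorization_self, Nat.factorization_eq_zero_of_not_dvd hm]

lemma coprime_card_ker_toPermHom_sylow [Nontrivial (Sylow p H)]
    (hdisj : Pairwise fun S T : Sylow p H ↦ Disjoint (S : Subgroup H) T) :
    p.Coprime (Nat.card (toPermHom H (Sylow p H)).ker) := by
  refine (Fact.out (p := p.Prime)).coprime_iff_not_dvd.2 fun hdvd ↦ ?_
  obtain ⟨⟨x, hxker⟩, hx⟩ := exists_prime_orderOf_dvd_card' p hdvd
  rw [Subgroup.orderOf_mk] at hx
  obtain ⟨S, hxS⟩ := exists_mem_sylow_of_orderOf_eq hx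
  obtain ⟨T, hTS⟩ := exists_ne S
  have hxT : x ∈ T := mem_sylow_of_mem_normalizer hxS (ker_toPermHom_sylow_le_normalizer T hxker)
  have hx1 : x = 1 := Subgroup.disjoint_def.1 (hdisj hTS) hxT hxS
  exact (Fact.out (p := p.Prime)).one_lt.ne (by rw [← hx, hx1, orderOf_one])

lemma toPermHom_sylow_injective_or_exists_normal [Nontrivial (Sylow p H)]
    (hdisj : Pairwise fun S T : Sylow p H ↦ Disjoint (S : Subgroup H) T) {q : ℕ} (hq : q.Prime)
    {S : Sylow p H} (hS : Nat.card (Subgroup.normalizer (S : Set H)) = Nat.card S * q) :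
    Function.Injective (toPermHom H (Sylow p H)) ∨
      ∃ N : Subgroup H, N.Normal ∧ Nat.card N = q := by
  have hdvd := Subgroup.card_dvd_of_le (ker_toPermHom_sylow_le_normalizer S)
  obtain ⟨k, hk⟩ := S.isPGroup'.exists_card_eq
  have hcop : (Nat.card (toPermHom H (Sylow p H)).ker).Coprime (Nat.card S) :=
    (hk : Nat.card S = _) ▸ (coprime_card_ker_toPermHom_sylow hdisj).symm.pow_right k
  rw [hS] at hdvd
  rcases (Nat.dvd_prime hq).1 (hcop.dvd_of_dvd_mul_left hdvd) with h | h
  · exact Or.inl ((MonoidHom.ker_eq_bot_iff _).1 (Subgroup.card_eq_one.1 h))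
  · exact Or.inr ⟨_, inferInstance, h⟩

lemma card_sylow_mul_pred (hdisj : Pairwise fun S T : Sylow p H ↦ Disjoint (S : Subgroup H) T)
    (S : Sylow p H) :
    Nat.card (Sylow p H) * (Nat.card S - 1) =
      Nat.card {x : H // x ≠ 1 ∧ ∃ T : Sylow p H, x ∈ T} := by
  have hbij : Function.Bijective (fun s : (T : Sylow p H) × {x : T // x ≠ 1} ↦
      (⟨s.2.1, fun h ↦ s.2.2 (Subtype.ext h), s.1, s.2.1.2⟩ :
        {x : H // x ≠ 1 ∧ ∃ T : Sylow p H, x ∈ T})) := by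
    constructor
    · rintro ⟨T, ⟨x, hxT⟩, hx1⟩ ⟨T', ⟨y, hyT⟩, hy1⟩ h
      obtain rfl : x = y := congrArg Subtype.val h
      obtain rfl : T = T' := by
        by_contra hne
        exact hx1 (Subtype.ext (Subgroup.disjoint_def.1 (hdisj hne) hxT hyT))
      rfl
    · rintro ⟨x, hx1, T, hxT⟩
      exact ⟨⟨T, ⟨x, hxT⟩, fun h ↦ hx1 (congrArg Subtype.val h)⟩, rfl⟩
  have hpred (T : Sylow p H) : Nat.card {x : T // x ≠ 1} = Nat.card S - 1 := by
    have hcompl := Set.ncard_compl ({1} : Set T)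
    rwa [Set.ncard_singleton, T.card_eq_multiplicity, ← S.card_eq_multiplicity] at hcompl
  have := Fintype.ofFinite (Sylow p H)
  rw [← Nat.card_congr (Equiv.ofBijective _ hbij), Nat.card_sigma]
  simp only [hpred, Finset.sum_const, Finset.card_univ, smul_eq_mul, Nat.card_eq_fintype_card]

lemma card_sylow_mul_pred_mul (hcomm : ∀ S : Sylow p H, IsMulCommutative S)
    (hcent : ∀ S : Sylow p H, ∀ x ∈ S, x ≠ 1 → Nat.card (Subgroup.centralizer {x}) ≤ Nat.card S)
    (hconj : ∀ S T : Sylow p H, ∀ x ∈ S, ∀ y ∈ T, x ≠ 1 → y ≠ 1 → IsConj x y)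
    (hp : p ∣ Nat.card H) (S : Sylow p H) :
    Nat.card (Sylow p H) * (Nat.card S - 1) * Nat.card S = Nat.card H := by
  obtain ⟨x, hxS, hx1⟩ :=
    (S : Subgroup H).bot_or_exists_ne_one.resolve_left (S.ne_bot_of_dvd_card hp)
  have := hcomm S
  have hclass (y : H) : IsConj x y ↔ y ≠ 1 ∧ ∃ T : Sylow p H, y ∈ T := by
    refine ⟨fun h ↦ ⟨?_, ?_⟩, fun ⟨hy1, T, hyT⟩ ↦ hconj S T x hxS y hyT hx1 hy1⟩
    · rintro rfl
      exact hx1 (isConj_one_left.1 h)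
    · obtain ⟨c, rfl⟩ := isConj_iff.1 h
      exact ⟨c • S, Subgroup.smul_mem_pointwise_smul x (MulAut.conj c) S hxS⟩
  rw [card_sylow_mul_pred (pairwise_disjoint_sylow hcomm hcent),
    sylow_eq_centralizer hxS (hcent S x hxS hx1),
    ← Nat.card_congr (Equiv.subtypeEquivRight hclass), card_isConj_mul_card_centralizer]

end Sylow

section Stabilizers

variable {H X : Type*} [Group H] [MulAction H X]

lemma card_orbit_mul_card_stabilizer (p : X) :
    Nat.card (orbit H p) * Nat.card (stabilizer H p) = Nat.card H := by
  rw [← Nat.card_prod, Nat.card_congr (orbitProdStabilizerEquivGroup H p)]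

lemma card_stabilizer_eq_of_mem_orbit {p q : X} (h : q ∈ orbit H p) :
    Nat.card (stabilizer H q) = Nat.card (stabilizer H p) :=
  Nat.card_congr (stabilizerEquivStabilizerOfOrbitRel h).toEquiv

lemma isConj_of_card_stabilizer_eq_two {p q : X} (hp : Nat.card (stabilizer H p) = 2)
    (hq : q ∈ orbit H p) {x y : H} (hx1 : x ≠ 1) (hx : p ∈ fixedBy X x) (hy1 : y ≠ 1)
    (hy : q ∈ fixedBy X y) : IsConj x y := by
  obtain ⟨g, rfl⟩ := hq
  have hmem : g⁻¹ * y * g ∈ stabilizer H p := by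
    rw [mem_stabilizer_iff, mul_smul, mul_smul, mem_fixedBy.1 hy, inv_smul_smul]
  obtain ⟨z, -, hz⟩ := (Nat.card_eq_two_iff' (1 : stabilizer H p)).1 hp
  have hxy : (⟨x, hx⟩ : stabilizer H p) = ⟨g⁻¹ * y * g, hmem⟩ :=
    (hz _ (by simpa [Subtype.ext_iff] using hx1)).trans
      (hz _ (by simpa [Subtype.ext_iff, mul_assoc, inv_mul_eq_one, eq_comm] using hy1)).symm
  exact isConj_iff.2 ⟨g, by rw [show x = g⁻¹ * y * g from congrArg Subtype.val hxy]; group⟩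

namespace HasTwoFixedPoints

lemma nonempty_mulEquiv_alternatingGroup_four (h2 : HasTwoFixedPoints H X)
    (hH : Nat.card H = 12) {p : X} (hp : Nat.card (stabilizer H p) = 3) :
    Nonempty (H ≃* alternatingGroup (Fin 4)) := by
  have horbit : Nat.card (orbit H p) = 4 := by
    have := card_orbit_mul_card_stabilizer (H := H) p
    lia
  have : Finite (orbit H p) := Nat.finite_of_card_ne_zero (by lia)
  exact nonempty_mulEquiv_alternatingGroup horbit
    (h2.toPermHom_orbit_injective (by lia)) (by rw [hH]; rfl)

lemma exists_fixed_mem_orbit_of_mem_sylow_two (h2 : HasTwoFixedPoints H X) {p : X}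
    (hp : ∀ q : X, 2 ∣ Nat.card (stabilizer H q) → q ∈ orbit H p) {S : Sylow 2 H} {x : H}
    (hxS : x ∈ S) (hx1 : x ≠ 1) : ∃ q ∈ orbit H p, q ∈ fixedBy X x := by
  obtain ⟨q, hq⟩ := h2.fixedBy_nonempty hx1
  have hdvd : orderOf x ∣ Nat.card (stabilizer H q) :=
    Subgroup.orderOf_dvd_natCard _ (mem_stabilizer_iff.2 hq)
  obtain ⟨k, hk⟩ := IsPGroup.iff_orderOf.1 S.isPGroup' ⟨x, hxS⟩
  rw [Subgroup.orderOf_mk] at hk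
  have hk0 : k ≠ 0 := by
    rintro rfl
    exact hx1 (orderOf_eq_one_iff.1 (by rw [hk, pow_zero]))
  exact ⟨q, hp q ((dvd_pow_self 2 hk0).trans (hk ▸ hdvd)), hq⟩

variable [Finite H]

lemma hasInvariantAxis_or_nonempty_mulEquiv_perm_four (h2 : HasTwoFixedPoints H X)
    (hH : Nat.card H = 24) :
    HasInvariantAxis H X ∨ Nonempty (H ≃* Equiv.Perm (Fin 4)) := by
  have : Fact (Nat.Prime 3) := ⟨Nat.prime_three⟩
  have hS : ∀ S : Sylow 3 H, Nat.card S = 3 :=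
    card_sylow_of_card_eq_pow_mul (k := 1) (m := 8) hH (by norm_num)
  let S : Sylow 3 H := default
  have hindex : S.index = 8 := by have := S.card_mul_index; rw [hS S] at this; lia
  have hcard : Nat.card (Sylow 3 H) = 1 ∨ Nat.card (Sylow 3 H) = 4 := by
    have hdvd : Nat.card (Sylow 3 H) ∣ 8 := hindex ▸ S.card_dvd_index
    have hmod : Nat.card (Sylow 3 H) % 3 = 1 := card_sylow_modEq_one 3 H
    have hle := Nat.le_of_dvd (by norm_num) hdvd
    interval_cases Nat.card (Sylow 3 H) <;> lia
  rcases hcard with hcard | hcard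
  · have : Subsingleton (Sylow 3 H) := (Nat.card_eq_one_iff_unique.1 hcard).1
    have := S.normal_of_subsingleton
    exact Or.inl (h2.hasInvariantAxis_of_normal S ((hS S).symm ▸ Nat.prime_three))
  have : Nontrivial (Sylow 3 H) := Finite.one_lt_card_iff_nontrivial.1 (by lia)
  have hnorm : Nat.card (Subgroup.normalizer (S : Set H)) = Nat.card S * 2 := by
    have := (Subgroup.normalizer (S : Set H)).card_mul_index
    rw [← S.card_eq_index_normalizer, hcard] at this
    rw [hS S]
    lia
  rcases toPermHom_sylow_injective_or_exists_normal
    (pairwise_disjoint_sylow_of_prime_card Nat.prime_three hS) Nat.prime_two hnorm with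
    hinj | ⟨N, hN, hN2⟩
  · exact Or.inr (nonempty_mulEquiv_perm hcard hinj (by rw [hH]; rfl))
  · exact Or.inl (h2.hasInvariantAxis_of_normal N (hN2 ▸ Nat.prime_two))

lemma card_sylow_two_eq_five (h2 : HasTwoFixedPoints H X) (hH : Nat.card H = 60) {p : X}
    (hp : Nat.card (stabilizer H p) = 2)
    (horbit : ∀ q : X, 2 ∣ Nat.card (stabilizer H q) → q ∈ orbit H p) :
    (∀ S : Sylow 2 H, Nat.card S = 4) ∧ Nat.card (Sylow 2 H) = 5 ∧
      Pairwise fun S T : Sylow 2 H ↦ Disjoint (S : Subgroup H) T := by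
  have hS : ∀ S : Sylow 2 H, Nat.card S = 4 :=
    card_sylow_of_card_eq_pow_mul (k := 2) (m := 15) hH (by norm_num)
  have hcomm (S : Sylow 2 H) : IsMulCommutative S :=
    IsPGroup.isMulCommutative_of_card_eq_prime_sq (p := 2) (hS S)
  have hcent (S : Sylow 2 H) (x : H) (hxS : x ∈ S) (hx1 : x ≠ 1) :
      Nat.card (Subgroup.centralizer {x}) ≤ Nat.card S := by
    obtain ⟨q, hqp, hq⟩ := h2.exists_fixed_mem_orbit_of_mem_sylow_two horbit hxS hx1
    have hle := h2.card_centralizer_le hx1 hq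
    rwa [card_stabilizer_eq_of_mem_orbit hqp, hp, show 2 * 2 = Nat.card S from (hS S).symm] at hle
  have hconj (S T : Sylow 2 H) (x : H) (hxS : x ∈ S) (y : H) (hyT : y ∈ T) (hx1 : x ≠ 1)
      (hy1 : y ≠ 1) : IsConj x y := by
    obtain ⟨q, hqp, hq⟩ := h2.exists_fixed_mem_orbit_of_mem_sylow_two horbit hxS hx1
    obtain ⟨r, hrp, hr⟩ := h2.exists_fixed_mem_orbit_of_mem_sylow_two horbit hyT hy1
    refine isConj_of_card_stabilizer_eq_two (p := q) (q := r) ?_ ?_ hx1 hq hy1 hr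
    · rw [card_stabilizer_eq_of_mem_orbit hqp, hp]
    · rwa [orbit_eq_iff.2 hqp]
  have hmul := card_sylow_mul_pred_mul hcomm hcent hconj (by lia) default
  rw [hS, hH] at hmul
  exact ⟨hS, by lia, pairwise_disjoint_sylow hcomm hcent⟩

lemma hasInvariantAxis_or_nonempty_mulEquiv_alternatingGroup_five (h2 : HasTwoFixedPoints H X)
    (hH : Nat.card H = 60) {p : X} (hp : Nat.card (stabilizer H p) = 2)
    (horbit : ∀ q : X, 2 ∣ Nat.card (stabilizer H q) → q ∈ orbit H p) :
    HasInvariantAxis H X ∨ Nonempty (H ≃* alternatingGroup (Fin 5)) := by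
  obtain ⟨hS, hcard, hdisj⟩ := h2.card_sylow_two_eq_five hH hp horbit
  have : Nontrivial (Sylow 2 H) := Finite.one_lt_card_iff_nontrivial.1 (by lia)
  let S : Sylow 2 H := default
  have hnorm : Nat.card (Subgroup.normalizer (S : Set H)) = Nat.card S * 3 := by
    have := (Subgroup.normalizer (S : Set H)).card_mul_index
    rw [← S.card_eq_index_normalizer, hcard] at this
    rw [hS S]
    lia
  rcases toPermHom_sylow_injective_or_exists_normal hdisj Nat.prime_three hnorm with
    hinj | ⟨N, hN, hN3⟩
  · exact Or.inr (nonempty_mulEquiv_alternatingGroup hcard hinj (by rw [hH]; rfl))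
  · exact Or.inl (h2.hasInvariantAxis_of_normal N (hN3 ▸ Nat.prime_three))

end HasTwoFixedPoints

end Stabilizers

section Orbits

variable {H X : Type*} [Group H] [MulAction H X]

lemma exists_orbit_representatives [Finite X] {α : Type*} [LinearOrder α] (f : X → α) {n : ℕ}
    (hn : Nat.card (orbitRel.Quotient H X) = n) :
    ∃ p : Fin n → X, Monotone (f ∘ p) ∧ (∀ x, ∃ i, x ∈ orbit H (p i)) ∧
      ∑ i, Nat.card (orbit H (p i)) = Nat.card X := by
  let e : Fin n ≃ orbitRel.Quotient H X := (Finite.equivFinOfCardEq hn).symm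
  let σ := Tuple.sort fun i ↦ f (e i).out
  refine ⟨fun i ↦ (e (σ i)).out, Tuple.monotone_sort fun i ↦ f (e i).out, fun x ↦ ?_, ?_⟩
  · refine ⟨σ.symm (e.symm (Quotient.mk _ x)), ?_⟩
    simp only [Equiv.apply_symm_apply]
    exact (orbitRel H X).symm (Quotient.mk_out (s := orbitRel H X) x)
  · have := Fintype.ofFinite (orbitRel.Quotient H X)
    rw [Nat.card_congr (selfEquivSigmaOrbits H X), Nat.card_sigma]
    exact Equiv.sum_comp (σ.trans e) fun ω ↦ Nat.card (orbit H ω.out)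

lemma two_le_card_stabilizer [Finite H] {p : X} (hp : stabilizer H p ≠ ⊥) :
    2 ≤ Nat.card (stabilizer H p) :=
  (stabilizer H p).one_lt_card_iff_ne_bot.2 hp

lemma two_mul_card_le_card_orbits_mul_card [Finite H] [Finite X]
    (hst : ∀ p : X, stabilizer H p ≠ ⊥) :
    2 * Nat.card X ≤ Nat.card (orbitRel.Quotient H X) * Nat.card H := by
  have := Fintype.ofFinite (orbitRel.Quotient H X)
  rw [Nat.card_congr (selfEquivSigmaOrbits H X), Nat.card_sigma, Finset.mul_sum,
    Nat.card_eq_fintype_card (α := orbitRel.Quotient H X), ← smul_eq_mul, ← Finset.card_univ]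
  refine Finset.sum_le_card_nsmul _ _ _ fun ω _ ↦ ?_
  rw [← card_orbit_mul_card_stabilizer (H := H) ω.out, mul_comm]
  exact Nat.mul_le_mul_left _ (two_le_card_stabilizer (hst _))

-- Divided by `N`, the equation `hsum` reads `1 / x + 1 / y + 1 / z = 1 + 2 / N`.
lemma platonic_arithmetic {N a b c x y z : ℕ} (ha : a * x = N) (hb : b * y = N) (hc : c * z = N)
    (hx : 2 ≤ x) (hxy : x ≤ y) (hyz : y ≤ z) (hsum : a + b + c = N + 2) :
    c = 2 ∨ x = 2 ∧ y = 3 ∧ (z = 3 ∧ N = 12 ∨ z = 4 ∧ N = 24 ∨ z = 5 ∧ N = 60) := by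
  have hx2 : x < 3 := by
    by_contra! h
    have := ha ▸ Nat.mul_le_mul_left a h
    have := hb ▸ Nat.mul_le_mul_left b (h.trans hxy)
    have := hc ▸ Nat.mul_le_mul_left c (h.trans (hxy.trans hyz))
    lia
  have hy3 : y < 4 := by
    by_contra! h
    have := hb ▸ Nat.mul_le_mul_left b h
    have := hc ▸ Nat.mul_le_mul_left c (h.trans hyz)
    lia
  obtain rfl : x = 2 := by lia
  have hz5 : y = 2 ∨ z < 6 := by
    by_contra! h
    have := hc ▸ Nat.mul_le_mul_left c h.2
    lia
  interval_cases y
  · left; lia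
  · right
    have : z < 6 := by lia
    interval_cases z <;> lia

variable (H X) in
/-- The poles of the action: the points fixed by some nontrivial element of `H`. -/
def poles : SubMulAction H X where
  carrier := {p | stabilizer H p ≠ ⊥}
  smul_mem' g p hp := by
    change stabilizer H (g • p) ≠ ⊥
    rw [stabilizer_smul_eq_stabilizer_map_conj]
    exact fun h ↦ hp ((Subgroup.map_eq_bot_iff_of_injective _ (MulAut.conj g).injective).1 h)

lemma fixedBy_subset_poles {h : H} (h1 : h ≠ 1) : fixedBy X h ⊆ poles H X := fun _ hp hbot ↦
  h1 (Subgroup.mem_bot.1 (hbot ▸ mem_stabilizer_iff.2 hp))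

lemma image_fixedBy_poles {h : H} (h1 : h ≠ 1) :
    Subtype.val '' fixedBy (poles H X) h = fixedBy X h := by
  ext p
  refine ⟨?_, fun hp ↦ ⟨⟨p, fixedBy_subset_poles h1 hp⟩, Subtype.ext hp, rfl⟩⟩
  rintro ⟨q, hq, rfl⟩
  exact congrArg Subtype.val hq

namespace HasTwoFixedPoints

variable [Finite H]

lemma card_add_two_mul_card [Finite X] (h2 : HasTwoFixedPoints H X) :
    Nat.card X + 2 * Nat.card H = Nat.card (orbitRel.Quotient H X) * Nat.card H + 2 := by
  classical
  have := Fintype.ofFinite H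
  have := Fintype.ofFinite X
  have := Fintype.ofFinite (Quotient (orbitRel H X))
  have hB := sum_card_fixedBy_eq_card_orbits_mul_card_group H X
  have hfix : ∀ h ∈ Finset.univ.erase (1 : H), Fintype.card (fixedBy X h) = 2 := fun h hh ↦ by
    rw [← h2 h (Finset.ne_of_mem_erase hh), ← Nat.card_eq_fintype_card, Nat.card_coe_set_eq]
  have hone : Fintype.card (fixedBy X (1 : H)) = Nat.card X := by
    rw [← Nat.card_eq_fintype_card, fixedBy_one_eq_univ, Nat.card_univ]
  rw [← Finset.add_sum_erase _ _ (Finset.mem_univ (1 : H)), Finset.sum_congr rfl hfix, hone,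
    Finset.sum_const, Finset.card_erase_of_mem (Finset.mem_univ _), Finset.card_univ, smul_eq_mul,
    ← Nat.card_eq_fintype_card, ← Nat.card_eq_fintype_card] at hB
  have : 0 < Nat.card H := Nat.card_pos
  have : Nat.card (orbitRel.Quotient H X) = Nat.card (Quotient (orbitRel H X)) := rfl
  lia

lemma card_eq_two_or_card_orbits_eq_three [Finite X] [Nontrivial H] (h2 : HasTwoFixedPoints H X)
    (hst : ∀ p : X, stabilizer H p ≠ ⊥) :
    Nat.card X = 2 ∨ Nat.card (orbitRel.Quotient H X) = 3 := by
  have hB := h2.card_add_two_mul_card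
  have hle := two_mul_card_le_card_orbits_mul_card hst
  have hH : 1 < Nat.card H := Finite.one_lt_card
  have hX : 2 ≤ Nat.card X := by
    obtain ⟨h, h1⟩ := exists_ne (1 : H)
    exact h2 h h1 ▸ Set.ncard_le_card _
  have hlt : Nat.card (orbitRel.Quotient H X) < 4 := by
    by_contra! h
    have := Nat.mul_le_mul_right (Nat.card H) h
    lia
  interval_cases Nat.card (orbitRel.Quotient H X) <;> lia

theorem classification_of_stabilizer_ne_bot [Finite X] [Nontrivial H] (h2 : HasTwoFixedPoints H X)
    (hst : ∀ p : X, stabilizer H p ≠ ⊥) :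
    HasInvariantAxis H X ∨ Nonempty (H ≃* alternatingGroup (Fin 4)) ∨
      Nonempty (H ≃* Equiv.Perm (Fin 4)) ∨ Nonempty (H ≃* alternatingGroup (Fin 5)) := by
  rcases h2.card_eq_two_or_card_orbits_eq_three hst with hX | horbits
  · exact Or.inl (h2.hasInvariantAxis_of_card_eq_two hX)
  have hB := h2.card_add_two_mul_card
  obtain ⟨p, hmono, hcover, hsum⟩ :=
    exists_orbit_representatives (fun x : X ↦ Nat.card (stabilizer H x)) horbits
  rw [horbits, ← hsum, Fin.sum_univ_three] at hB
  have hmul (i : Fin 3) := card_orbit_mul_card_stabilizer (H := H) (p i)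
  rcases platonic_arithmetic (hmul 0) (hmul 1) (hmul 2) (two_le_card_stabilizer (hst _))
    (hmono (by decide)) (hmono (by decide)) (by lia) with
    h | ⟨h0, h1, ⟨hz, hH⟩ | ⟨-, hH⟩ | ⟨hz, hH⟩⟩
  · exact Or.inl (h2.hasInvariantAxis_of_card_orbit_eq_two (hst _) h)
  · exact Or.inr (Or.inl (h2.nonempty_mulEquiv_alternatingGroup_four hH hz))
  · exact (h2.hasInvariantAxis_or_nonempty_mulEquiv_perm_four hH).imp_right (Or.inr ∘ Or.inl)
  · refine (h2.hasInvariantAxis_or_nonempty_mulEquiv_alternatingGroup_five hH h0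
      fun q hq ↦ ?_).imp_right (Or.inr ∘ Or.inr)
    obtain ⟨i, hi⟩ := hcover q
    rw [card_stabilizer_eq_of_mem_orbit hi] at hq
    fin_cases i
    · exact hi
    · exact absurd hq (h1.symm ▸ by norm_num)
    · exact absurd hq (hz.symm ▸ by norm_num)

lemma finite_poles (h2 : HasTwoFixedPoints H X) : Finite (poles H X) := by
  have hsub : (poles H X : Set X) ⊆ ⋃ h : {h : H // h ≠ 1}, fixedBy X h.1 := fun p hp ↦ by
    obtain ⟨h, hh, h1⟩ := (stabilizer H p).bot_or_exists_ne_one.resolve_left hp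
    exact Set.mem_iUnion.2 ⟨⟨h, h1⟩, hh⟩
  exact (Set.finite_iUnion fun h : {h : H // h ≠ 1} ↦ h2.finite_fixedBy h.2).subset hsub

theorem classification [Nontrivial H] (h2 : HasTwoFixedPoints H X) :
    HasInvariantAxis H X ∨ Nonempty (H ≃* alternatingGroup (Fin 4)) ∨
      Nonempty (H ≃* Equiv.Perm (Fin 4)) ∨ Nonempty (H ≃* alternatingGroup (Fin 5)) := by
  have := h2.finite_poles
  have h2' : HasTwoFixedPoints H (poles H X) := fun h h1 ↦ by
    rw [← h2 h h1, ← image_fixedBy_poles (X := X) h1,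
      Set.ncard_image_of_injective _ Subtype.val_injective]
  have hst (p : poles H X) : stabilizer H p ≠ ⊥ := by
    rw [SubMulAction.stabilizer_of_subMul]
    exact p.2
  refine (h2'.classification_of_stabilizer_ne_bot hst).imp_left ?_
  rintro ⟨h, h1, hh⟩
  refine ⟨h, h1, fun g ↦ ?_⟩
  rw [← image_fixedBy_poles h1, ← image_fixedBy_poles (by simpa using h1), hh g]

end HasTwoFixedPoints

end Orbits

section CartanSubgroups

variable (K : Type*) [Field K]

/-- The split Cartan subgroup of `GL₂(K)`: the diagonal matrices. -/
def splitCartan : Subgroup (GL (Fin 2) K) where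
  carrier := {g | g 0 1 = 0 ∧ g 1 0 = 0}
  mul_mem' := by
    rintro a b ⟨ha, ha'⟩ ⟨hb, hb'⟩
    simp [mul_apply, ha, ha', hb, hb']
  one_mem' := by simp
  inv_mem' := by
    rintro g ⟨h, h'⟩
    simp [inv_def, adjugate_fin_two, h, h']

/-- The normalizer of the split Cartan subgroup of `GL₂(K)`: the diagonal and the antidiagonal
matrices. -/
def splitCartanNormalizer : Subgroup (GL (Fin 2) K) where
  carrier := {g | (g 0 1 = 0 ∧ g 1 0 = 0) ∨ (g 0 0 = 0 ∧ g 1 1 = 0)}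
  mul_mem' := by
    rintro a b (⟨ha, ha'⟩ | ⟨ha, ha'⟩) (⟨hb, hb'⟩ | ⟨hb, hb'⟩) <;>
      simp [mul_apply, ha, ha', hb, hb']
  one_mem' := by simp
  inv_mem' := by
    rintro g (⟨h, h'⟩ | ⟨h, h'⟩) <;>
      simp [inv_def, adjugate_fin_two, h, h']

variable {K}

/-- The normalizer of the nonsplit Cartan subgroup of `GL₂(K)` attached to `δ`: the matrices
`[[a, δb], [b, a]]` and `[[a, -δb], [b, -a]]`. -/
def nonsplitCartanNormalizer (δ : K) : Subgroup (GL (Fin 2) K) where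
  carrier := {g | (g 1 1 = g 0 0 ∧ g 0 1 = δ * g 1 0) ∨ (g 1 1 = -g 0 0 ∧ g 0 1 = -(δ * g 1 0))}
  mul_mem' := by
    rintro a b (⟨ha, ha'⟩ | ⟨ha, ha'⟩) (⟨hb, hb'⟩ | ⟨hb, hb'⟩) <;>
      simp [mul_apply, ha, ha', hb, hb'] <;> grind
  one_mem' := by simp
  inv_mem' := by
    rintro g (⟨h, h'⟩ | ⟨h, h'⟩) <;>
      simp [inv_def, adjugate_fin_two, h, h'] <;>
      grind

end CartanSubgroups

section TwoByTwo

variable {K : Type*} [Field K]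

lemma mem_center_iff_apply {g : GL (Fin 2) K} :
    g ∈ Subgroup.center (GL (Fin 2) K) ↔ g ∈ splitCartan K ∧ g 0 0 = g 1 1 := by
  rw [GeneralLinearGroup.mem_center_iff_val_mem_range_scalar]
  constructor
  · rintro ⟨c, hc⟩
    simp [splitCartan, ← hc]
  · rintro ⟨⟨h01, h10⟩, h⟩
    refine ⟨g 0 0, ?_⟩
    ext i j
    fin_cases i <;> fin_cases j <;> simp [h01, h10, h]

lemma isConj_companion {A C : GL (Fin 2) K} (hA : A ∉ Subgroup.center (GL (Fin 2) K))
    (hC : C.val = !![0, -A.val.det; 1, A.val.trace]) : IsConj C A := by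
  obtain ⟨v, hv⟩ : ∃ v : Fin 2 → K, (of ![v, A.val *ᵥ v])ᵀ.det ≠ 0 := by
    by_contra! h
    have h0 := h ![1, 0]
    have h1 := h ![0, 1]
    have h2 := h ![1, 1]
    simp only [mulVec_fin_two, cons_val_zero, cons_val_one, cons_val_fin_one, det_transpose,
      det_fin_two_of] at h0 h1 h2
    exact hA (mem_center_iff_apply.2 ⟨⟨by grind, by grind⟩, by grind⟩)
  -- In the basis `v, A v`, the matrix of `A` is the companion matrix of its characteristic
  -- polynomial.
  refine isConj_iff.2 ⟨GeneralLinearGroup.mkOfDetNeZero _ hv, ?_⟩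
  rw [mul_inv_eq_iff_eq_mul]
  ext i j
  fin_cases i <;> fin_cases j <;>
    simp [hC, GeneralLinearGroup.mkOfDetNeZero, mul_apply, det_fin_two, trace_fin_two] <;> ring

lemma isConj_of_trace_eq_of_det_eq {A B : GL (Fin 2) K}
    (hA : A ∉ Subgroup.center (GL (Fin 2) K)) (hB : B ∉ Subgroup.center (GL (Fin 2) K))
    (ht : A.val.trace = B.val.trace) (hd : A.val.det = B.val.det) : IsConj A B := by
  let C := GeneralLinearGroup.mkOfDetNeZero !![0, -A.val.det; 1, A.val.trace]
    (by simpa using A.det_ne_zero)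
  have hCA : IsConj C A := isConj_companion hA rfl
  have hCB : IsConj C B := isConj_companion hB (by rw [← ht, ← hd]; rfl)
  exact hCA.symm.trans hCB

variable {g x : GL (Fin 2) K}

lemma not_isParabolic_of_mem_splitCartanNormalizer [NeZero (2 : K)]
    (hg : g ∈ splitCartanNormalizer K) : ¬ g.IsParabolic := by
  rintro ⟨hc, hd⟩
  have hdet := g.det_ne_zero
  rw [discr_fin_two, trace_fin_two] at hd
  rw [det_fin_two] at hd hdet
  rcases hg with ⟨h01, h10⟩ | ⟨h00, h11⟩
  · refine hc (GeneralLinearGroup.mem_center_iff_val_mem_range_scalar.1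
      (mem_center_iff_apply.2 ⟨⟨h01, h10⟩, ?_⟩))
    have : (g 0 0 - g 1 1) ^ 2 = 0 := by linear_combination hd - 4 * g 1 0 * h01
    exact sub_eq_zero.1 (pow_eq_zero_iff two_ne_zero |>.1 this)
  · have : (2 : K) * 2 ≠ 0 := mul_ne_zero two_ne_zero two_ne_zero
    grind

lemma discr_ne_zero_of_not_isParabolic (hp : ¬ g.IsParabolic)
    (hg : g ∉ Subgroup.center (GL (Fin 2) K)) : g.val.discr ≠ 0 :=
  fun h ↦ hp ⟨GeneralLinearGroup.mem_center_iff_val_mem_range_scalar.not.1 hg, h⟩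

lemma notMem_center_of_discr_ne_zero (hd : g.val.discr ≠ 0) :
    g ∉ Subgroup.center (GL (Fin 2) K) := fun hg ↦ by
  obtain ⟨⟨h01, -⟩, h⟩ := mem_center_iff_apply.1 hg
  apply hd
  rw [discr_fin_two, trace_fin_two, det_fin_two, h01, h]
  ring

lemma exists_conj_mem_splitCartan [NeZero (2 : K)] (h0 : g.val.discr ≠ 0)
    (hg : IsSquare g.val.discr) : ∃ x, x * g * x⁻¹ ∈ splitCartan K := by
  obtain ⟨s, hs⟩ := hg
  have hs0 : s ≠ 0 := by rintro rfl; exact h0 (by rw [hs, mul_zero])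
  have h2 : (2 : K) ≠ 0 := two_ne_zero
  let t := g.val.trace
  have hdet : (t + s) / 2 * ((t - s) / 2) = g.val.det := by
    rw [discr_fin_two] at hs
    field_simp
    linear_combination hs
  let D : GL (Fin 2) K := GeneralLinearGroup.mkOfDetNeZero !![(t + s) / 2, 0; 0, (t - s) / 2]
    (by rw [det_fin_two_of]; simpa [hdet] using g.det_ne_zero)
  have hD : D.val = !![(t + s) / 2, 0; 0, (t - s) / 2] := rfl
  have hgD : IsConj g D := by
    refine isConj_of_trace_eq_of_det_eq (notMem_center_of_discr_ne_zero h0) (fun hc ↦ ?_) ?_ ?_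
    · have h := (mem_center_iff_apply.1 hc).2
      simp only [hD, Matrix.of_apply, cons_val', cons_val_zero, cons_val_one, cons_val_fin_one] at h
      field_simp at h
      exact mul_ne_zero h2 hs0 (by linear_combination h)
    · rw [hD, trace_fin_two_of]; field_simp; ring
    · rw [hD, det_fin_two_of, mul_zero, sub_zero, hdet]
  obtain ⟨x, hx⟩ := isConj_iff.1 hgD
  exact ⟨x, hx ▸ ⟨rfl, rfl⟩⟩

lemma notMem_center_of_not_conj_mem_splitCartan (hg : ¬ ∃ x, x * g * x⁻¹ ∈ splitCartan K) :
    g ∉ Subgroup.center (GL (Fin 2) K) :=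
  fun hc ↦ hg ⟨1, by simpa using (mem_center_iff_apply.1 hc).1⟩

lemma not_isSquare_discr_of_not_conj_mem_splitCartan [NeZero (2 : K)] (hp : ¬ g.IsParabolic)
    (hg : ¬ ∃ x, x * g * x⁻¹ ∈ splitCartan K) : ¬ IsSquare g.val.discr :=
  fun hs ↦ hg <| exists_conj_mem_splitCartan (discr_ne_zero_of_not_isParabolic hp
    (notMem_center_of_not_conj_mem_splitCartan hg)) hs

lemma trace_eq_zero_of_conj_mem_splitCartanNormalizer
    (hx : x * g * x⁻¹ ∈ splitCartanNormalizer K) (hg : x * g * x⁻¹ ∉ splitCartan K) :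
    g.val.trace = 0 := by
  obtain ⟨h00, h11⟩ := hx.resolve_left hg
  rw [← trace_units_conj x, ← Units.val_mul, ← Units.val_mul, trace_fin_two, h00, h11, add_zero]

lemma discr_eq_of_trace_eq_zero (hg : g.val.trace = 0) : g.val.discr = 2 ^ 2 * -g.val.det := by
  rw [discr_fin_two, hg]; ring

lemma isSquare_discr_of_conj_mem_splitCartan
    (hx : x * g * x⁻¹ ∈ splitCartan K) : IsSquare g.val.discr := by
  rw [← discr_conj x, ← coe_units_inv, ← Units.val_mul, ← Units.val_mul]
  obtain ⟨h01, h10⟩ := hx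
  refine ⟨(x * g * x⁻¹) 0 0 - (x * g * x⁻¹) 1 1, ?_⟩
  rw [discr_fin_two, trace_fin_two, det_fin_two, h01, h10]
  ring

lemma not_isSquare_neg_det_of_not_conj_mem_splitCartan [NeZero (2 : K)]
    (hx : x * g * x⁻¹ ∈ splitCartanNormalizer K) (hg : ¬ ∃ y, y * g * y⁻¹ ∈ splitCartan K) :
    ¬ IsSquare (-g.val.det) := by
  have ht : g.val.trace = 0 :=
    trace_eq_zero_of_conj_mem_splitCartanNormalizer hx fun h ↦ hg ⟨x, h⟩
  have hp : ¬ g.IsParabolic := by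
    simpa using not_isParabolic_of_mem_splitCartanNormalizer hx
  exact fun h ↦ not_isSquare_discr_of_not_conj_mem_splitCartan hp hg <|
    discr_eq_of_trace_eq_zero ht ▸ (IsSquare.sq 2).mul h

end TwoByTwo

section ProjectiveLine

open OnePoint

variable {K : Type*} [Field K] {g h : GL (Fin 2) K}

lemma splitCartan_commute (hg : g ∈ splitCartan K) (hh : h ∈ splitCartan K) : Commute g h := by
  ext i j
  fin_cases i <;> fin_cases j <;>
    simp [Matrix.mul_apply, hg.1, hg.2, hh.1, hh.2, mul_comm]

variable [DecidableEq K]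

lemma smul_zero_eq_self_iff : g • ((0 : K) : OnePoint K) = (0 : K) ↔ g 0 1 = 0 := by
  have hdet := g.det_ne_zero
  rw [det_fin_two] at hdet
  rw [smul_some_eq_ite, mul_zero, mul_zero, zero_add, zero_add]
  split_ifs with h11
  · exact iff_of_false (infty_ne_coe _) fun h01 ↦ hdet (by rw [h11, h01]; ring)
  · rw [coe_eq_coe, div_eq_zero_iff, or_iff_left h11]

lemma mem_splitCartan_iff_subset_fixedBy :
    g ∈ splitCartan K ↔ {((0 : K) : OnePoint K), ∞} ⊆ fixedBy (OnePoint K) g := by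
  rw [Set.pair_subset_iff, mem_fixedBy, mem_fixedBy, smul_zero_eq_self_iff, smul_infty_eq_self_iff]
  rfl

lemma fixedBy_of_mem_splitCartan (hg : g ∈ splitCartan K) (hd : g.val.discr ≠ 0) :
    fixedBy (OnePoint K) g = {((0 : K) : OnePoint K), ∞} := by
  refine (mem_splitCartan_iff_subset_fixedBy.1 hg).antisymm' fun p hp ↦ ?_
  have hne : g 0 0 ≠ g 1 1 := fun h ↦
    notMem_center_of_discr_ne_zero hd (mem_center_iff_apply.2 ⟨hg, h⟩)
  obtain ⟨h01, h10⟩ := hg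
  have h11 : g 1 1 ≠ 0 := fun h11 ↦ g.det_ne_zero (by rw [det_fin_two, h01, h11]; ring)
  cases p with
  | infty => simp
  | coe c =>
    rw [mem_fixedBy, smul_some_eq_ite, h01, h10, zero_mul, zero_add, add_zero, if_neg h11,
      coe_eq_coe, div_eq_iff h11] at hp
    simpa [sub_eq_zero, hne] using
      (by linear_combination hp : c * (g 0 0 - g 1 1) = 0)

variable [IsAlgClosed K] [NeZero (2 : K)]

lemma ncard_fixedBy_eq_two (hd : g.val.discr ≠ 0) :
    (fixedBy (OnePoint K) g).ncard = 2 := by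
  obtain ⟨x, hx⟩ := exists_conj_mem_splitCartan hd (IsAlgClosed.exists_eq_mul_self _)
  have hxd : (x * g * x⁻¹).val.discr ≠ 0 := by
    rwa [Units.val_mul, Units.val_mul, coe_units_inv, discr_conj]
  rw [← Set.ncard_smul_set x, smul_fixedBy, fixedBy_of_mem_splitCartan hx hxd,
    Set.ncard_pair (coe_ne_infty 0)]

lemma commute_of_fixedBy_eq (hd : g.val.discr ≠ 0)
    (hgh : fixedBy (OnePoint K) g = fixedBy (OnePoint K) h) : Commute g h := by
  obtain ⟨x, hx⟩ := exists_conj_mem_splitCartan hd (IsAlgClosed.exists_eq_mul_self _)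
  refine (Commute.conj_iff x).1 (splitCartan_commute hx ?_)
  rw [mem_splitCartan_iff_subset_fixedBy] at hx ⊢
  rwa [← smul_fixedBy, ← hgh, smul_fixedBy]

/-- The action of `PGL₂(K)` on the projective line by Möbius transformations. -/
instance : MulAction PGL(2, K) (OnePoint K) :=
  ProjGenLinGroup.mulActionOfGL fun u p ↦ by
    cases p <;> simp [smul_infty_eq_self_iff, smul_some_eq_ite]

end ProjectiveLine

section Projective

instance {n R : Type*} [Fintype n] [DecidableEq n] [CommRing R] [Finite R] : Finite PGL(n, R) :=
  .of_surjective _ ProjGenLinGroup.mk_surjective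

lemma discr_map {K L : Type*} [CommRing K] [CommRing L] (f : K →+* L)
    (A : Matrix (Fin 2) (Fin 2) K) : (A.map f).discr = f A.discr := by
  simp [discr_fin_two, trace_fin_two, det_fin_two, map_ofNat f 4]

variable {K : Type*} [Field K] [NeZero (2 : K)]

theorem exists_commute_conj_or_nonempty_mulEquiv (G : Subgroup (GL (Fin 2) K))
    [Finite (G.map ProjGenLinGroup.mk)] [Nontrivial (G.map ProjGenLinGroup.mk)]
    (hG : ∀ g ∈ G, ¬ g.IsParabolic) :
    (∃ m ∈ G, m.val.discr ≠ 0 ∧ ∀ g ∈ G, Commute (g * m * g⁻¹) m) ∨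
    Nonempty (G.map ProjGenLinGroup.mk ≃* alternatingGroup (Fin 4)) ∨
    Nonempty (G.map ProjGenLinGroup.mk ≃* Equiv.Perm (Fin 4)) ∨
    Nonempty (G.map ProjGenLinGroup.mk ≃* alternatingGroup (Fin 5)) := by
  classical
  let L := AlgebraicClosure K
  let f := algebraMap K L
  have : NeZero (2 : L) := ⟨by rw [← map_ofNat f 2, map_ne_zero]; exact two_ne_zero⟩
  let : MulAction (G.map ProjGenLinGroup.mk) (OnePoint L) :=
    compHom _ ((ProjGenLinGroup.map f).comp (Subgroup.subtype _))
  have hmap {g : GL (Fin 2) K} (hg : g.val.discr ≠ 0) :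
      (GeneralLinearGroup.map f g).val.discr ≠ 0 := by
    change (g.val.map f).discr ≠ 0
    rwa [discr_map, map_ne_zero]
  have hdiscr {g : GL (Fin 2) K} (hg : g ∈ G) (h1 : ProjGenLinGroup.mk g ≠ 1) :
      g.val.discr ≠ 0 :=
    discr_ne_zero_of_not_isParabolic (hG g hg) (ProjGenLinGroup.mk_eq_one.not.1 h1)
  have h2 : HasTwoFixedPoints (G.map ProjGenLinGroup.mk) (OnePoint L) := by
    rintro ⟨_, g, hg, rfl⟩ h1
    exact ncard_fixedBy_eq_two (hmap (hdiscr hg (fun h ↦ h1 (Subtype.ext h))))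
  refine h2.classification.imp_left ?_
  rintro ⟨⟨_, m, hm, rfl⟩, h1, haxis⟩
  have hd := hdiscr hm (fun h ↦ h1 (Subtype.ext h))
  refine ⟨m, hm, hd, fun g hg ↦ ?_⟩
  have hcomm : Commute (GeneralLinearGroup.map f m) (GeneralLinearGroup.map f (g * m * g⁻¹)) :=
    commute_of_fixedBy_eq (hmap hd) (haxis ⟨_, g, hg, rfl⟩).symm
  exact hcomm.symm.of_map (Units.map_injective (Matrix.map_injective f.injective))

end Projective

section CartanNormalizers

variable {K : Type*} [Field K] {g m : GL (Fin 2) K}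

lemma mem_splitCartanNormalizer_of_commute (hm : m ∈ splitCartan K) (hd : m.val.discr ≠ 0)
    (hc : Commute (g * m * g⁻¹) m) : g ∈ splitCartanNormalizer K := by
  obtain ⟨h01, h10⟩ := hm
  have hne : m 0 0 ≠ m 1 1 := fun h ↦
    notMem_center_of_discr_ne_zero hd (mem_center_iff_apply.2 ⟨⟨h01, h10⟩, h⟩)
  have hg := g.det_ne_zero
  rw [det_fin_two] at hg
  obtain ⟨n, hn⟩ : ∃ n, n = g * m * g⁻¹ := ⟨_, rfl⟩
  have hng : n * g = g * m := by rw [hn]; group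
  rw [← hn] at hc
  have hc' := fun i j ↦ congrArg (fun A : GL (Fin 2) K ↦ A i j) hc.eq
  have hng' := fun i j ↦ congrArg (fun A : GL (Fin 2) K ↦ A i j) hng
  simp only [Units.val_mul, mul_apply, Fin.sum_univ_two, Fin.forall_fin_two] at hc' hng'
  change (g 0 1 = 0 ∧ g 1 0 = 0) ∨ (g 0 0 = 0 ∧ g 1 1 = 0)
  grind

lemma mem_nonsplitCartanNormalizer_of_commute [NeZero (2 : K)] {δ r : K} (hδ : δ ≠ 0)
    (hm : m.val = !![0, δ * r; r, 0]) (hc : Commute (g * m * g⁻¹) m) :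
    g ∈ nonsplitCartanNormalizer δ := by
  obtain ⟨n, hn⟩ : ∃ n, n = g * m * g⁻¹ := ⟨_, rfl⟩
  have hng : n * g = g * m := by rw [hn]; group
  have htr : n.val.trace = m.val.trace := by
    rw [hn, Units.val_mul, Units.val_mul, trace_units_conj]
  have hdet : n.val.det = m.val.det := by rw [hn, Units.val_mul, Units.val_mul, det_units_conj]
  have hr : r ≠ 0 := by
    rintro rfl
    exact m.det_ne_zero (by rw [hm]; simp)
  rw [← hn] at hc
  have hc' := fun i j ↦ congrArg (fun A : GL (Fin 2) K ↦ A i j) hc.eq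
  have hng' := fun i j ↦ congrArg (fun A : GL (Fin 2) K ↦ A i j) hng
  simp only [Units.val_mul, mul_apply, Fin.sum_univ_two, Fin.forall_fin_two, hm, of_apply,
    cons_val', cons_val_zero, cons_val_one, cons_val_fin_one] at hc' hng'
  rw [hm, trace_fin_two, trace_fin_two_of, add_zero] at htr
  rw [hm, det_fin_two, det_fin_two_of] at hdet
  have h01 : n 0 1 = δ * n 1 0 := mul_right_cancel₀ hr (by linear_combination hc'.1.1)
  have h00 : n 0 0 = 0 := by
    have h : n 0 0 = n 1 1 := mul_right_cancel₀ (mul_ne_zero hδ hr) (by linear_combination hc'.1.2)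
    exact (mul_eq_zero_iff_left (two_ne_zero (α := K))).1 (by linear_combination htr + h)
  have h10 : n 1 0 = r ∨ n 1 0 = -r :=
    sq_eq_sq_iff_eq_or_eq_neg.1 (mul_left_cancel₀ hδ (by grind))
  change (g 1 1 = g 0 0 ∧ g 0 1 = δ * g 1 0) ∨ (g 1 1 = -g 0 0 ∧ g 0 1 = -(δ * g 1 0))
  rcases h10 with h10 | h10
  · left
    grind
  · right
    grind

lemma exists_conj_mem_splitCartanNormalizer_of_trace_eq_zero
    (hm : m ∉ Subgroup.center (GL (Fin 2) K)) (ht : m.val.trace = 0) :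
    ∃ x, x * m * x⁻¹ ∈ splitCartanNormalizer K := by
  let C := GeneralLinearGroup.mkOfDetNeZero !![0, -m.val.det; 1, m.val.trace]
    (by simpa using m.det_ne_zero)
  obtain ⟨x, hx⟩ := isConj_iff.1 (isConj_companion (C := C) hm rfl).symm
  exact ⟨x, hx ▸ .inr ⟨rfl, ht⟩⟩

lemma mul_eq_neg_mul_of_trace_eq_zero {R : Type*} [CommRing R] {A B : Matrix (Fin 2) (Fin 2) R}
    (hA : A.trace = 0) (hB : B.trace = 0) (hAB : (A * B).trace = 0) : A * B = -(B * A) := by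
  rw [trace_fin_two] at hA hB hAB
  simp only [mul_apply, Fin.sum_univ_two] at hAB
  ext i j
  rw [neg_apply, mul_apply, mul_apply, Fin.sum_univ_two, Fin.sum_univ_two]
  fin_cases i <;> fin_cases j <;> dsimp <;> grind

lemma commute_conj_of_trace_eq_zero
    (hg : g ∉ Subgroup.center (GL (Fin 2) K) → g.val.trace = 0)
    (hm : m ∉ Subgroup.center (GL (Fin 2) K) → m.val.trace = 0)
    (hgm : g * m ∉ Subgroup.center (GL (Fin 2) K) → (g * m).val.trace = 0) :
    Commute (g * m * g⁻¹) m := by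
  have key (h : Commute g m) : Commute (g * m * g⁻¹) m := by
    rw [h.eq, mul_inv_cancel_right]
  by_cases hgc : g ∈ Subgroup.center (GL (Fin 2) K)
  · exact key (Subgroup.mem_center_iff.1 hgc m).symm
  by_cases hmc : m ∈ Subgroup.center (GL (Fin 2) K)
  · exact key (Subgroup.mem_center_iff.1 hmc g)
  by_cases hgmc : g * m ∈ Subgroup.center (GL (Fin 2) K)
  · refine key (mul_right_cancel (b := m) ?_)
    rw [← Subgroup.mem_center_iff.1 hgmc m, mul_assoc]
  · have hanti : g * m = -(m * g) :=
      Units.ext (mul_eq_neg_mul_of_trace_eq_zero (hg hgc) (hm hmc) (hgm hgmc))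
    rw [hanti, neg_mul, mul_inv_cancel_right]
    exact (Commute.refl m).neg_left

lemma exists_forall_conj_mem_splitCartanNormalizer [NeZero (2 : K)] {G : Subgroup (GL (Fin 2) K)}
    (hd : m.val.discr ≠ 0) (hs : IsSquare m.val.discr)
    (hG : ∀ g ∈ G, Commute (g * m * g⁻¹) m) :
    ∃ x, ∀ g ∈ G, x * g * x⁻¹ ∈ splitCartanNormalizer K := by
  obtain ⟨x, hx⟩ := exists_conj_mem_splitCartan hd hs
  refine ⟨x, fun g hg ↦ mem_splitCartanNormalizer_of_commute hx ?_ ?_⟩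
  · rwa [Units.val_mul, Units.val_mul, coe_units_inv, discr_conj]
  · simpa only [conj_mul, conj_inv] using (Commute.conj_iff x).2 (hG g hg)

lemma trace_eq_zero_of_mem_nonsplitCartanNormalizer [NeZero (2 : K)] {δ : K} (hδ : ¬ IsSquare δ)
    (hg : g ∈ nonsplitCartanNormalizer δ) (hc : g ∉ Subgroup.center (GL (Fin 2) K))
    (hloc : ∃ x, x * g * x⁻¹ ∈ splitCartanNormalizer K) : g.val.trace = 0 := by
  obtain ⟨h11, h01⟩ | ⟨h11, -⟩ := hg
  · obtain ⟨x, hx⟩ := hloc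
    refine trace_eq_zero_of_conj_mem_splitCartanNormalizer hx fun hx' ↦ hδ ?_
    have hdisc : g.val.discr = δ * (2 * g 1 0) ^ 2 := by
      rw [discr_fin_two, trace_fin_two, det_fin_two, h11, h01]
      ring
    have h10 : g 1 0 ≠ 0 := fun h10 ↦
      hc (mem_center_iff_apply.2 ⟨⟨by rw [h01, h10, mul_zero], h10⟩, h11.symm⟩)
    have hsq := (isSquare_discr_of_conj_mem_splitCartan hx').div (IsSquare.sq (2 * g 1 0))
    rwa [hdisc, mul_div_cancel_right₀ _ (pow_ne_zero 2 (mul_ne_zero two_ne_zero h10))] at hsq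
  · rw [trace_fin_two, h11, add_neg_cancel]

variable [Finite K]

lemma isSquare_mul_of_not_isSquare {a b : K} (ha : ¬ IsSquare a) (hb : ¬ IsSquare b) :
    IsSquare (a * b) := by
  classical
  have := Fintype.ofFinite K
  have hab : a * b ≠ 0 := mul_ne_zero (fun h ↦ ha (h ▸ .zero)) (fun h ↦ hb (h ▸ .zero))
  rw [← quadraticChar_one_iff_isSquare hab, map_mul, quadraticChar_neg_one_iff_not_isSquare.2 ha,
    quadraticChar_neg_one_iff_not_isSquare.2 hb]
  norm_num

lemma exists_conj_val_eq_of_trace_eq_zero {δ : K} (hδ : ¬ IsSquare δ)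
    (ht : m.val.trace = 0) (hd : ¬ IsSquare m.val.discr) :
    ∃ x r, (x * m * x⁻¹).val = !![0, δ * r; r, 0] := by
  have hδ0 : δ ≠ 0 := by rintro rfl; exact hδ .zero
  have hdet : ¬ IsSquare (-m.val.det)⁻¹ := fun h ↦
    hd (discr_eq_of_trace_eq_zero ht ▸ (IsSquare.sq 2).mul (isSquare_inv.1 h))
  obtain ⟨s, hs⟩ := isSquare_mul_of_not_isSquare hδ hdet
  have hdet0 : δ * (-m.val.det)⁻¹ ≠ 0 := mul_ne_zero hδ0 fun h ↦ hdet (h ▸ .zero)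
  have hs0 : s ≠ 0 := by rintro rfl; exact hdet0 (by rw [hs, mul_zero])
  have hm0 := m.det_ne_zero
  have hdet' : -(δ * s⁻¹ * s⁻¹) = m.val.det := by
    field_simp at hs ⊢
    linear_combination hs
  let A : GL (Fin 2) K := GeneralLinearGroup.mkOfDetNeZero !![0, δ * s⁻¹; s⁻¹, 0]
    (by simp [hδ0, hs0])
  have hA : A.val = !![0, δ * s⁻¹; s⁻¹, 0] := rfl
  obtain ⟨x, hx⟩ : ∃ x, x * m * x⁻¹ = A := isConj_iff.1 <| by
    refine isConj_of_trace_eq_of_det_eq ?_ ?_ ?_ ?_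
    · exact notMem_center_of_discr_ne_zero fun h ↦ hd (h ▸ .zero)
    · exact fun h ↦ inv_ne_zero hs0 (mem_center_iff_apply.1 h).1.2
    · rw [ht, hA, trace_fin_two_of, add_zero]
    · rw [hA, det_fin_two_of, ← hdet']; ring
  exact ⟨x, s⁻¹, by rw [hx, hA]⟩

lemma exists_forall_conj_mem_nonsplitCartanNormalizer [NeZero (2 : K)] {δ : K}
    (hδ : ¬ IsSquare δ) {G : Subgroup (GL (Fin 2) K)} (ht : m.val.trace = 0)
    (hd : ¬ IsSquare m.val.discr) (hG : ∀ g ∈ G, Commute (g * m * g⁻¹) m) :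
    ∃ x, ∀ g ∈ G, x * g * x⁻¹ ∈ nonsplitCartanNormalizer δ := by
  obtain ⟨x, r, hx⟩ := exists_conj_val_eq_of_trace_eq_zero hδ ht hd
  refine ⟨x, fun g hg ↦ mem_nonsplitCartanNormalizer_of_commute (fun h ↦ hδ (h ▸ .zero)) hx ?_⟩
  simpa only [conj_mul, conj_inv] using (Commute.conj_iff x).2 (hG g hg)

theorem exists_forall_conj_mem_splitCartanNormalizer_of_trace_eq_zero [NeZero (2 : K)]
    (hneg : IsSquare (-1 : K)) {G : Subgroup (GL (Fin 2) K)}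
    (hG : ∀ g ∈ G, g ∉ Subgroup.center (GL (Fin 2) K) → g.val.trace = 0) :
    ∃ x, ∀ g ∈ G, x * g * x⁻¹ ∈ splitCartanNormalizer K := by
  have hcenter {x g : GL (Fin 2) K} (hg : g ∈ Subgroup.center (GL (Fin 2) K)) :
      x * g * x⁻¹ ∈ splitCartanNormalizer K := by
    rw [Subgroup.mem_center_iff.1 hg x, mul_inv_cancel_right]
    exact .inl (mem_center_iff_apply.1 hg).1
  by_cases hGc : G ≤ Subgroup.center (GL (Fin 2) K)
  · exact ⟨1, fun g hg ↦ hcenter (hGc hg)⟩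
  obtain ⟨m, hm, hmc⟩ := SetLike.not_le_iff_exists.1 hGc
  by_cases hsq : ∃ g ∈ G, g ∉ Subgroup.center (GL (Fin 2) K) ∧ IsSquare g.val.det
  · obtain ⟨g, hg, hgc, hs⟩ := hsq
    have hdisc := discr_eq_of_trace_eq_zero (hG g hg hgc)
    refine exists_forall_conj_mem_splitCartanNormalizer (m := g) ?_ ?_ fun h hh ↦ ?_
    · rw [hdisc]
      exact mul_ne_zero (pow_ne_zero 2 two_ne_zero) (neg_ne_zero.2 g.det_ne_zero)
    · rw [hdisc, ← neg_one_mul]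
      exact (IsSquare.sq 2).mul (hneg.mul hs)
    · exact commute_conj_of_trace_eq_zero (hG h hh) (hG g hg) (hG _ (mul_mem hh hg))
  push Not at hsq
  obtain ⟨x, hx⟩ := exists_conj_mem_splitCartanNormalizer_of_trace_eq_zero hmc (hG m hm hmc)
  refine ⟨x, fun g hg ↦ ?_⟩
  by_cases hgc : g ∈ Subgroup.center (GL (Fin 2) K)
  · exact hcenter hgc
  have hgm : g * m ∈ Subgroup.center (GL (Fin 2) K) := by
    by_contra hgmc
    refine hsq _ (G.mul_mem hg hm) hgmc ?_
    rw [Units.val_mul, det_mul]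
    exact isSquare_mul_of_not_isSquare (hsq g hg hgc) (hsq m hm hmc)
  have heq : x * g * x⁻¹ = (x * (g * m) * x⁻¹) * (x * m * x⁻¹)⁻¹ := by group
  exact heq ▸ mul_mem (hcenter hgm) (inv_mem hx)

theorem exists_forall_conj_mem_splitCartanNormalizer_or_nonsplitCartanNormalizer
    [NeZero (2 : K)] {δ : K} (hδ : ¬ IsSquare δ) {G : Subgroup (GL (Fin 2) K)}
    (hloc : ∀ g ∈ G, ∃ x, x * g * x⁻¹ ∈ splitCartanNormalizer K) (hm : m ∈ G)
    (hd : m.val.discr ≠ 0) (hG : ∀ g ∈ G, Commute (g * m * g⁻¹) m) :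
    (∃ x, ∀ g ∈ G, x * g * x⁻¹ ∈ splitCartanNormalizer K) ∨
      ((∃ x, ∀ g ∈ G, x * g * x⁻¹ ∈ nonsplitCartanNormalizer δ) ∧ ¬ IsSquare (-1 : K)) := by
  by_cases hs : IsSquare m.val.discr
  · exact .inl (exists_forall_conj_mem_splitCartanNormalizer hd hs hG)
  obtain ⟨y, hy⟩ := hloc m hm
  have ht : m.val.trace = 0 := trace_eq_zero_of_conj_mem_splitCartanNormalizer hy fun hy' ↦
    hs (isSquare_discr_of_conj_mem_splitCartan hy')
  obtain ⟨x, hx⟩ := exists_forall_conj_mem_nonsplitCartanNormalizer hδ ht hs hG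
  refine or_iff_not_imp_left.2 fun hsplit ↦ ⟨⟨x, hx⟩, fun hneg ↦ hsplit ?_⟩
  refine exists_forall_conj_mem_splitCartanNormalizer_of_trace_eq_zero hneg fun g hg hgc ↦ ?_
  obtain ⟨z, hz⟩ := hloc g hg
  rw [← trace_units_conj x, ← Units.val_mul, ← Units.val_mul]
  refine trace_eq_zero_of_mem_nonsplitCartanNormalizer hδ (hx g hg) (fun hc ↦ hgc ?_)
    ⟨z * x⁻¹, by convert hz using 1; group⟩
  rwa [(inferInstance : (Subgroup.center (GL (Fin 2) K)).Normal).mem_comm_iff,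
    inv_mul_cancel_left] at hc

end CartanNormalizers

section Congruences

variable {K : Type*} [Field K] {g x : GL (Fin 2) K}

lemma orderOf_mk_conj : orderOf (ProjGenLinGroup.mk (x * g * x⁻¹)) =
    orderOf (ProjGenLinGroup.mk g) := by
  rw [map_mul, map_mul, map_inv]
  exact (MulAut.conj (ProjGenLinGroup.mk x)).orderOf_eq (ProjGenLinGroup.mk g)

lemma mk_pow_eq_one_iff_of_mem_splitCartan (hg : g ∈ splitCartan K) {n : ℕ} :
    ProjGenLinGroup.mk g ^ n = 1 ↔ g 0 0 ^ n = g 1 1 ^ n := by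
  have hdiag : g.val = diagonal fun i ↦ g i i := by
    ext i j
    fin_cases i <;> fin_cases j <;> simp [hg.1, hg.2]
  have hpow (i : Fin 2) : (g ^ n) i i = g i i ^ n := by
    rw [Units.val_pow_eq_pow_val, hdiag, diagonal_pow]
    simp
  rw [← map_pow, ProjGenLinGroup.mk_eq_one, mem_center_iff_apply, hpow, hpow,
    and_iff_right (pow_mem hg n)]

lemma mk_sq_eq_one_of_trace_eq_zero (hg : g.val.trace = 0) : ProjGenLinGroup.mk g ^ 2 = 1 := by
  rw [trace_fin_two] at hg
  rw [← map_pow, ProjGenLinGroup.mk_eq_one, mem_center_iff_apply]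
  change ((g ^ 2) 0 1 = 0 ∧ (g ^ 2) 1 0 = 0) ∧ _
  simp only [sq, Units.val_mul, mul_apply, Fin.sum_univ_two]
  grind

lemma mem_splitCartan_of_two_lt_orderOf_mk (hx : x * g * x⁻¹ ∈ splitCartanNormalizer K)
    (ho : 2 < orderOf (ProjGenLinGroup.mk g)) : x * g * x⁻¹ ∈ splitCartan K := by
  by_contra hx'
  exact ho.not_ge <| orderOf_le_of_pow_eq_one two_pos <|
    mk_sq_eq_one_of_trace_eq_zero (trace_eq_zero_of_conj_mem_splitCartanNormalizer hx hx')

/-- The quadratic character of the determinant, which is trivial on scalar matrices and therefore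
defined on `PGL₂`. -/
noncomputable def detChar (K : Type*) [Field K] [Fintype K] [DecidableEq K] : PGL(2, K) →* ℤˣ :=
  ProjGenLinGroup.lift ((quadraticChar K).toUnitHom.comp GeneralLinearGroup.det) <| by
    ext u
    simp [map_pow]

lemma detChar_mk_eq_one_iff [Fintype K] [DecidableEq K] :
    detChar K (ProjGenLinGroup.mk g) = 1 ↔ IsSquare g.val.det := by
  rw [← quadraticChar_one_iff_isSquare g.det_ne_zero, ← Units.val_inj]
  rfl

variable {G : Subgroup (GL (Fin 2) K)}

lemma exists_orderOf_mk_eq_four_of_mulEquiv_perm [Finite K]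
    (e : G.map ProjGenLinGroup.mk ≃* Equiv.Perm (Fin 4)) (hg : g ∈ G)
    (hs : ¬ IsSquare g.val.det) :
    ∃ h ∈ G, orderOf (ProjGenLinGroup.mk h) = 4 ∧ ¬ IsSquare h.val.det := by
  classical
  have := Fintype.ofFinite K
  let f : Equiv.Perm (Fin 4) →* ℤˣ :=
    ((detChar K).comp (Subgroup.subtype _)).comp e.symm.toMonoidHom
  have hfg : f (e ⟨_, g, hg, rfl⟩) = -1 := by
    refine (Int.units_eq_one_or _).resolve_left fun h ↦ hs (detChar_mk_eq_one_iff.1 ?_)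
    simpa [f] using h
  have hsign : f = Equiv.Perm.sign := Equiv.Perm.eq_sign_of_surjective_hom fun u ↦ by
    obtain rfl | rfl := Int.units_eq_one_or u
    exacts [⟨1, map_one f⟩, ⟨_, hfg⟩]
  obtain ⟨h, hh, hhe⟩ := (e.symm (finRotate 4)).2
  refine ⟨h, hh, ?_, fun hsq ↦ ?_⟩
  · rw [hhe, Subgroup.orderOf_coe, MulEquiv.orderOf_eq, orderOf_finRotate 2]
  · have hrot : f (finRotate 4) = 1 := by
      rw [← detChar_mk_eq_one_iff, hhe] at hsq
      exact hsq
    rw [hsign] at hrot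
    exact absurd hrot (by decide)

variable [Fintype K]

lemma orderOf_mk_dvd_card_sub_one_of_mem_splitCartan (hg : g ∈ splitCartan K) :
    orderOf (ProjGenLinGroup.mk g) ∣ Fintype.card K - 1 := by
  have hdet := g.det_ne_zero
  rw [det_fin_two, hg.1, zero_mul, sub_zero] at hdet
  rw [orderOf_dvd_iff_pow_eq_one, mk_pow_eq_one_iff_of_mem_splitCartan hg,
    FiniteField.pow_card_sub_one_eq_one _ (left_ne_zero_of_mul hdet),
    FiniteField.pow_card_sub_one_eq_one _ (right_ne_zero_of_mul hdet)]

lemma isSquare_det_of_two_mul_orderOf_mk_dvd (hg : g ∈ splitCartan K)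
    (ho : 2 * orderOf (ProjGenLinGroup.mk g) ∣ Fintype.card K - 1) : IsSquare g.val.det := by
  by_cases hK : ringChar K = 2
  · exact FiniteField.isSquare_of_char_two hK _
  obtain ⟨k, hk⟩ := ho
  have hdet := g.det_ne_zero
  rw [FiniteField.isSquare_iff hK hdet]
  have hcard : Fintype.card K / 2 = orderOf (ProjGenLinGroup.mk g) * k := by
    have := FiniteField.odd_card_of_char_ne_two hK
    grind
  have hpow := (mk_pow_eq_one_iff_of_mem_splitCartan hg).1 (pow_orderOf_eq_one _)
  rw [det_fin_two, hg.1, zero_mul, sub_zero] at hdet ⊢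
  calc (g 0 0 * g 1 1) ^ (Fintype.card K / 2)
      = (g 0 0 ^ orderOf (ProjGenLinGroup.mk g)) ^ k *
          (g 1 1 ^ orderOf (ProjGenLinGroup.mk g)) ^ k := by rw [hcard, mul_pow, pow_mul, pow_mul]
    _ = g 0 0 ^ (Fintype.card K - 1) := by
      rw [← hpow, ← pow_mul, ← pow_add, hk]
      ring
    _ = 1 := FiniteField.pow_card_sub_one_eq_one _ (left_ne_zero_of_mul hdet)

lemma orderOf_dvd_card_sub_one (hloc : ∀ g ∈ G, ∃ x, x * g * x⁻¹ ∈ splitCartanNormalizer K)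
    {y : G.map ProjGenLinGroup.mk} (hy : 2 < orderOf y) : orderOf y ∣ Fintype.card K - 1 := by
  obtain ⟨_, g, hg, rfl⟩ := y
  rw [← Subgroup.orderOf_coe] at hy ⊢
  obtain ⟨x, hx⟩ := hloc g hg
  rw [← orderOf_mk_conj (x := x)]
  exact orderOf_mk_dvd_card_sub_one_of_mem_splitCartan (mem_splitCartan_of_two_lt_orderOf_mk hx hy)

lemma prime_dvd_card_sub_one (hloc : ∀ g ∈ G, ∃ x, x * g * x⁻¹ ∈ splitCartanNormalizer K)
    {p : ℕ} (hp : p.Prime) (hp2 : 2 < p) (hpG : p ∣ Nat.card (G.map ProjGenLinGroup.mk)) :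
    p ∣ Fintype.card K - 1 := by
  have := Fact.mk hp
  obtain ⟨y, rfl⟩ := exists_prime_orderOf_dvd_card' p hpG
  exact orderOf_dvd_card_sub_one hloc hp2

lemma card_mod_four_eq_three {α : Type*} [Fintype α] [DecidableEq α]
    (e : G.map ProjGenLinGroup.mk ≃* alternatingGroup α) (hg : g ∈ G)
    (hs : ¬ IsSquare (-g.val.det)) : Fintype.card K % 4 = 3 := by
  classical
  let f : G.map ProjGenLinGroup.mk →* ℤˣ := (detChar K).comp (Subgroup.subtype _)
  have hf : f ⟨_, g, hg, rfl⟩ = 1 := by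
    simpa using DFunLike.congr_fun (monoidHom_alternatingGroup_eq_one
      (f.comp e.symm.toMonoidHom)) (e ⟨_, g, hg, rfl⟩)
  by_contra h
  have hneg := FiniteField.isSquare_neg_one_iff.2 h
  exact hs (neg_one_mul g.val.det ▸ hneg.mul (detChar_mk_eq_one_iff.1 hf))

theorem card_mod_twelve_eq_seven (hloc : ∀ g ∈ G, ∃ x, x * g * x⁻¹ ∈ splitCartanNormalizer K)
    (e : G.map ProjGenLinGroup.mk ≃* alternatingGroup (Fin 4)) (hg : g ∈ G)
    (hs : ¬ IsSquare (-g.val.det)) : Fintype.card K % 12 = 7 := by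
  have hcard : Nat.card (G.map ProjGenLinGroup.mk) = 12 := by
    rw [Nat.card_congr e.toEquiv, nat_card_alternatingGroup, Nat.card_fin]
    rfl
  have h3 := prime_dvd_card_sub_one hloc Nat.prime_three (by norm_num) (by rw [hcard]; norm_num)
  have h4 := card_mod_four_eq_three e hg hs
  lia

theorem card_mod_sixty_eq_thirtyOne (hloc : ∀ g ∈ G, ∃ x, x * g * x⁻¹ ∈ splitCartanNormalizer K)
    (e : G.map ProjGenLinGroup.mk ≃* alternatingGroup (Fin 5)) (hg : g ∈ G)
    (hs : ¬ IsSquare (-g.val.det)) : Fintype.card K % 60 = 31 := by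
  have hcard : Nat.card (G.map ProjGenLinGroup.mk) = 60 := by
    rw [Nat.card_congr e.toEquiv, nat_card_alternatingGroup, Nat.card_fin]
    rfl
  have h3 := prime_dvd_card_sub_one hloc Nat.prime_three (by norm_num) (by rw [hcard]; norm_num)
  have h5 := prime_dvd_card_sub_one hloc Nat.prime_five (by norm_num) (by rw [hcard]; norm_num)
  have h4 := card_mod_four_eq_three e hg hs
  lia

theorem card_mod_twentyFour_eq_thirteen
    (hloc : ∀ g ∈ G, ∃ x, x * g * x⁻¹ ∈ splitCartanNormalizer K)
    (e : G.map ProjGenLinGroup.mk ≃* Equiv.Perm (Fin 4)) (hg : g ∈ G)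
    (hs : ¬ IsSquare (-g.val.det)) : Fintype.card K % 24 = 13 := by
  have hcard : Nat.card (G.map ProjGenLinGroup.mk) = 24 := by
    rw [Nat.card_congr e.toEquiv, Nat.card_perm, Nat.card_fin]
    rfl
  have h3 := prime_dvd_card_sub_one hloc Nat.prime_three (by norm_num) (by rw [hcard]; norm_num)
  have h4 : 4 ∣ Fintype.card K - 1 := by
    have ho : orderOf (e.symm (finRotate 4)) = 4 := by
      rw [MulEquiv.orderOf_eq, orderOf_finRotate 2]
    exact ho ▸ orderOf_dvd_card_sub_one hloc (by rw [ho]; norm_num)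
  have hneg : IsSquare (-1 : K) := FiniteField.isSquare_neg_one_iff.2 (by lia)
  obtain ⟨h, hh, ho, hdet⟩ := exists_orderOf_mk_eq_four_of_mulEquiv_perm e hg fun hsq ↦
    hs (neg_one_mul g.val.det ▸ hneg.mul hsq)
  obtain ⟨x, hx⟩ := hloc h hh
  have h8 : ¬ 8 ∣ Fintype.card K - 1 := fun h8 ↦ hdet <| by
    have hx' := mem_splitCartan_of_two_lt_orderOf_mk hx (by rw [ho]; norm_num)
    have hsq := isSquare_det_of_two_mul_orderOf_mk_dvd hx'
      (by rw [orderOf_mk_conj, ho]; exact h8)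
    rwa [Units.val_mul, Units.val_mul, det_units_conj] at hsq
  have := Fintype.one_lt_card (α := K)
  lia

end Congruences

theorem local_global_normalizer_split_cartan_general {K : Type*} [Field K] [Fintype K] {δ : K}
    (hδ : ¬ IsSquare δ) (G : Subgroup (GL (Fin 2) K))
    (hloc : ∀ g ∈ G, ∃ x, x * g * x⁻¹ ∈ splitCartanNormalizer K)
    (hnd : ∃ g ∈ G, ¬ ∃ x, x * g * x⁻¹ ∈ splitCartan K) :
    (∃ x, ∀ g ∈ G, x * g * x⁻¹ ∈ splitCartanNormalizer K) ∨
    ((∃ x, ∀ g ∈ G, x * g * x⁻¹ ∈ nonsplitCartanNormalizer δ) ∧ Fintype.card K % 4 = 3) ∨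
    (Nonempty (G.map ProjGenLinGroup.mk ≃* alternatingGroup (Fin 4)) ∧
      Fintype.card K % 12 = 7) ∨
    (Nonempty (G.map ProjGenLinGroup.mk ≃* Equiv.Perm (Fin 4)) ∧ Fintype.card K % 24 = 13) ∨
    (Nonempty (G.map ProjGenLinGroup.mk ≃* alternatingGroup (Fin 5)) ∧
      Fintype.card K % 60 = 31) := by
  have : NeZero (2 : K) :=
    ⟨Ring.two_ne_zero fun h ↦ hδ (FiniteField.isSquare_of_char_two h δ)⟩
  have hpar : ∀ g ∈ G, ¬ g.IsParabolic := fun g hg ↦ by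
    obtain ⟨x, hx⟩ := hloc g hg
    simpa using not_isParabolic_of_mem_splitCartanNormalizer hx
  obtain ⟨s, hs, hsd⟩ := hnd
  have hdet : ¬ IsSquare (-s.val.det) := by
    obtain ⟨x, hx⟩ := hloc s hs
    exact not_isSquare_neg_det_of_not_conj_mem_splitCartan hx hsd
  have : Nontrivial (G.map ProjGenLinGroup.mk) := ⟨⟨_, s, hs, rfl⟩, 1, fun h ↦
    notMem_center_of_not_conj_mem_splitCartan hsd
      (ProjGenLinGroup.mk_eq_one.1 (congrArg Subtype.val h))⟩
  rcases exists_commute_conj_or_nonempty_mulEquiv G hpar with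
    ⟨m, hm, hd, hcomm⟩ | ⟨⟨e⟩⟩ | ⟨⟨e⟩⟩ | ⟨⟨e⟩⟩
  · refine (exists_forall_conj_mem_splitCartanNormalizer_or_nonsplitCartanNormalizer hδ hloc hm hd
      hcomm).imp_right fun h ↦ .inl (h.imp_right fun hneg ↦ ?_)
    rwa [FiniteField.isSquare_neg_one_iff, not_not] at hneg
  · exact .inr (.inr (.inl ⟨⟨e⟩, card_mod_twelve_eq_seven hloc e hs hdet⟩))
  · exact .inr (.inr (.inr (.inl ⟨⟨e⟩, card_mod_twentyFour_eq_thirteen hloc e hs hdet⟩)))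
  · exact .inr (.inr (.inr (.inr ⟨⟨e⟩, card_mod_sixty_eq_thirtyOne hloc e hs hdet⟩)))

/-- If every element of `G ≤ GL₂(F_ℓ)` lies in a conjugate of `N_sp` but
some element is not diagonalizable, then `G` is contained in a conjugate of `N_sp`, or in
a conjugate of `N_ns` with `ℓ ≡ 3 (mod 4)`, or its projective image is exceptional with
the stated congruence on `ℓ`. -/
theorem local_global_normalizer_split_cartan
    {ℓ : ℕ} [Fact ℓ.Prime] (hℓ : ℓ ≠ 2) (δ : ZMod ℓ) (hδ : ¬ IsSquare δ)
    (G : Subgroup (GL2 ℓ))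
    (hloc : ∀ g ∈ G, ∃ x : GL2 ℓ, InNsp (x * g * x⁻¹))
    (hnd : ∃ g ∈ G, ¬ ∃ x : GL2 ℓ, IsDiag (x * g * x⁻¹)) :
    (∃ x : GL2 ℓ, ∀ g ∈ G, InNsp (x * g * x⁻¹)) ∨
    ((∃ x : GL2 ℓ, ∀ g ∈ G, InNns δ (x * g * x⁻¹)) ∧ ℓ % 4 = 3) ∨
    (IsA4 (projImage G) ∧ ℓ % 12 = 7) ∨
    (IsS4 (projImage G) ∧ ℓ % 24 = 13) ∨
    (IsA5 (projImage G) ∧ ℓ % 60 = 31) := by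
  have h := local_global_normalizer_split_cartan_general hδ G hloc hnd
  rwa [ZMod.card] at h
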